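/- For every integer n ≥ 2 and every ε > 0 there exists a finite set S of 4n points in the plane in general position and points u, v ∈ S such that every path between u and v in ΘΘ₆(S) has length at least (1 − ε)·(2n − 1)·|uv|. In particular, the spanning ratio of ΘΘ₆ on sets of N points can be Ω(N). -/

import Mathlib

/-!
In the basis `1, e^{iπ/3}` the cone of a vector `(x, y)` is determined by the signs of `x`, `y` and
`x + y`, and its projective length is proportional to `max (|x|, |y|, |x + y|)`. Hence the graph
`ΘΘ₆` of points in general position depends only on how `x`, `y` and `x + y` order them.

The point set is a perturbation of a double spiral in the triangular lattice. Its two arms run from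
a common centre outwards side by side; consecutive clusters of an arm are at distance `2`, and so
are clusters of the same level on different arms. The perturbation makes every edge of `ΘΘ₆` stay
within a cluster or connect consecutive clusters along the spiral, so that there are no shortcuts
between the arms: an edge connecting different clusters has length about `2` and changes the signed
position along the spiral by `1`. The outer ends of the arms are at distance about `2`, but their
positions differ by `2n - 1`.

That no other edge exists is a statement about ranks. Going up one level exchanges the roles of `x`
and `y` and shifts all ranks, and points of distant levels are ordered by level in all three orders,
so it suffices to inspect finitely many levels. A pair `u → v` is excluded in one of two ways: by a
point closer to `u` in the cone of `u` containing `v`, or by an edge `w → v` of `Θ₆` with `w` closer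
to `v` in the cone of `v` containing `u`. The perturbations decay geometrically with the distance
from the centre, so that in a sum of two coordinates the one closer to the centre decides the order
within a level.
-/

open Real

noncomputable section

/-- Counterclockwise angle in `[0, 2π)` from the positive x-axis to the direction of `z`. -/
def argIn (z : ℂ) : ℝ := if 0 ≤ Complex.arg z then Complex.arg z else Complex.arg z + 2 * π

/-- The half-open cone `C_i(u)` with apex `u`: points `p ≠ u` whose direction from `u` has
counterclockwise angle in `[(i-1)π/3, iπ/3)`. -/
def cone (i : ℕ) (u : ℂ) : Set ℂ :=
  {p | p ≠ u ∧ argIn (p - u) ∈ Set.Ico (((i : ℝ) - 1) * (π / 3)) ((i : ℝ) * (π / 3))}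

/-- The index `i ∈ {1, …, 6}` of the cone of `u` containing `v`. -/
def coneIdx (u v : ℂ) : ℕ := (⌊argIn (v - u) / (π / 3)⌋).toNat + 1

/-- The angle of the bisector ray of the cone of `u` containing `v`. -/
def bisAngle (u v : ℂ) : ℝ := ((coneIdx u v : ℝ) - 1) * (π / 3) + π / 6

/-- The projective distance from `u` to `v`: the Euclidean distance from `u` to the
orthogonal projection of `v` onto the bisector ray of the cone of `u` containing `v`. -/
def projDist (u v : ℂ) : ℝ :=
  ((v - u) * Complex.exp (-(Complex.I * (bisAngle u v : ℂ)))).re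

/-- `S` is in general position: no two points of `S` lie on a common line parallel to one of
the six rays from the origin at angles `jπ/3`. -/
def GenPos (S : Finset ℂ) : Prop :=
  ∀ u ∈ S, ∀ v ∈ S, u ≠ v → ∀ j : ℕ, argIn (v - u) ≠ (j : ℝ) * (π / 3)

/-- `S` is in convex position: every point of `S` is an extreme point of the convex hull. -/
def ConvexPos (S : Finset ℂ) : Prop :=
  ∀ p ∈ S, p ∈ Set.extremePoints ℝ (convexHull ℝ (S : Set ℂ))

/-- `u → v` is a directed edge of `Θ₆(S)`: `v` minimizes the projective distance from `u`
among the points of `S` in the cone of `u` containing `v`. -/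
def ThetaEdge (S : Finset ℂ) (u v : ℂ) : Prop :=
  u ∈ S ∧ v ∈ S ∧ v ≠ u ∧
    ∀ w ∈ S, w ∈ cone (coneIdx u v) u → projDist u v ≤ projDist u w

/-- `u → v` is a directed edge of `ΘΘ₆(S)`: it is an edge of `Θ₆(S)` and among all incoming
`Θ₆`-edges `w → v` with `w` in the same cone of `v` as `u`, it minimizes `‖wv‖`. -/
def ThetaThetaEdge (S : Finset ℂ) (u v : ℂ) : Prop :=
  ThetaEdge S u v ∧
    ∀ w, ThetaEdge S w v → coneIdx v w = coneIdx v u → projDist u v ≤ projDist w v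

/-- Undirected adjacency in `ΘΘ₆(S)`: paths may use edges in either direction. -/
def TTAdj (S : Finset ℂ) (u v : ℂ) : Prop := ThetaThetaEdge S u v ∨ ThetaThetaEdge S v u

/-- `p` is a path between `u` and `v` with respect to the adjacency relation `A`. -/
def IsPath (A : ℂ → ℂ → Prop) (u v : ℂ) (p : List ℂ) : Prop :=
  p.Chain' A ∧ p.head? = some u ∧ p.getLast? = some v

/-- The Euclidean length of the polygonal path through the points of `p`. -/
def pathLength (p : List ℂ) : ℝ := (List.zipWith dist p p.tail).sum

lemma mul_abs_sub_le_pathLength {A : ℂ → ℂ → Prop} {φ : ℂ → ℝ} {L : ℝ} (hL : 0 ≤ L)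
    (hA : ∀ a b, A a b → L * |φ a - φ b| ≤ dist a b) {u v : ℂ} {p : List ℂ}
    (hp : IsPath A u v p) : L * |φ u - φ v| ≤ pathLength p := by
  induction p generalizing u with
  | nil => simp [IsPath] at hp
  | cons a q ih =>
    obtain ⟨chain, head, last⟩ := hp
    obtain rfl : a = u := by simpa using head
    cases q with
    | nil =>
      obtain rfl : a = v := by simpa using last
      simp [pathLength]
    | cons b r =>
      obtain ⟨hab, chain⟩ := List.isChain_cons_cons.mp chain
      calc L * |φ a - φ v| ≤ L * |φ a - φ b| + L * |φ b - φ v| := by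
            rw [← mul_add]
            gcongr
            exact abs_sub_le _ _ _
        _ ≤ dist a b + pathLength (b :: r) :=
            add_le_add (hA a b hab) (ih ⟨chain, rfl, by simpa using last⟩)
        _ = pathLength (a :: b :: r) := by simp [pathLength]

/-! ### Hexagonal coordinates -/

/-- The primitive sixth root of unity `e^{iπ/3}`, whose powers span the bounding rays of the
cones. -/
def sixthRoot : ℂ := Complex.exp ((π / 3 : ℝ) * Complex.I)

/-- The point with coordinates `(x, y)` in the basis `1, e^{iπ/3}`. The lines parallel to the cone
boundaries are the level lines of `x`, `y` and `x + y`. -/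
def hexPt (x y : ℝ) : ℂ := x + y * sixthRoot

/-- The norm, in hexagonal coordinates, whose unit ball is a regular hexagon; up to the factor
`√3 / 2` it is the projective distance. -/
def hexNorm (x y : ℝ) : ℝ := max |x| (max |y| |x + y|)

/-- The number of the open cone containing the vector `hexPt x y`, read off from the signs of `x`,
`y` and `x + y`; meaningful only if none of them is zero. -/
def sector (x y : ℝ) : ℕ :=
  if 0 < x then if 0 < y then 1 else if 0 < x + y then 6 else 5
  else if 0 < y then if 0 < x + y then 2 else 3 else 4

lemma sixthRoot_eq : sixthRoot = 1 / 2 + (√3 / 2 : ℝ) * Complex.I := by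
  rw [sixthRoot, Complex.exp_mul_I, ← Complex.ofReal_cos, ← Complex.ofReal_sin, cos_pi_div_three,
    sin_pi_div_three]
  push_cast
  ring

lemma sixthRoot_pow (j : ℕ) :
    sixthRoot ^ j = Complex.exp ((j * (π / 3) : ℝ) * Complex.I) := by
  rw [sixthRoot, ← Complex.exp_nat_mul]
  push_cast
  ring_nf

lemma sixthRoot_sq : sixthRoot ^ 2 = sixthRoot - 1 := by
  have sq_sqrt_three : ((√3 : ℝ) : ℂ) ^ 2 = 3 := by
    rw [← Complex.ofReal_pow, Real.sq_sqrt (by norm_num), Complex.ofReal_ofNat]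
  rw [sixthRoot_eq]
  push_cast
  linear_combination (Complex.I ^ 2 / 4) * sq_sqrt_three + (3 / 4) * Complex.I_sq

lemma hexPt_re (x y : ℝ) : (hexPt x y).re = x + y / 2 := by
  simp [hexPt, sixthRoot_eq, div_eq_mul_inv]

lemma hexPt_im (x y : ℝ) : (hexPt x y).im = √3 / 2 * y := by
  simp [hexPt, sixthRoot_eq, mul_comm]

lemma hexPt_sub (x y x' y' : ℝ) : hexPt x y - hexPt x' y' = hexPt (x - x') (y - y') := by
  simp only [hexPt, Complex.ofReal_sub]
  ring

lemma hexPt_mul_sixthRoot_pow_succ (x y : ℝ) (j : ℕ) :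
    hexPt x y * sixthRoot ^ (j + 1) = hexPt (-y) (x + y) * sixthRoot ^ j := by
  simp only [hexPt, Complex.ofReal_neg, Complex.ofReal_add]
  linear_combination y * sixthRoot ^ j * sixthRoot_sq

lemma norm_hexPt (x y : ℝ) : ‖hexPt x y‖ = √(x ^ 2 + x * y + y ^ 2) := by
  rw [Complex.norm_eq_sqrt_sq_add_sq, hexPt_re, hexPt_im, mul_pow, div_pow, Real.sq_sqrt (by simp)]
  ring_nf

lemma norm_hexPt_le (x y : ℝ) : ‖hexPt x y‖ ≤ |x| + |y| := by
  refine (norm_add_le _ _).trans_eq ?_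
  rw [norm_mul, sixthRoot, Complex.norm_exp_ofReal_mul_I, mul_one, Complex.norm_real,
    Complex.norm_real, Real.norm_eq_abs, Real.norm_eq_abs]

lemma hexNorm_neg (x y : ℝ) : hexNorm (-x) (-y) = hexNorm x y := by
  rw [hexNorm, ← neg_add, abs_neg, abs_neg, abs_neg, hexNorm]

/-! ### Cones and projective distances in hexagonal coordinates -/

lemma argIn_polar {r θ : ℝ} (hr : 0 < r) (hθ : 0 ≤ θ) (hθ' : θ < 2 * π) :
    argIn (r * Complex.exp (θ * Complex.I)) = θ := by
  rw [argIn, Complex.arg_real_mul _ hr]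
  rcases le_or_gt θ π with hπ | hπ
  · have arg_eq : Complex.arg (Complex.exp (θ * Complex.I)) = θ := by
      rw [Complex.exp_mul_I]
      exact Complex.arg_cos_add_sin_mul_I ⟨by linarith [pi_pos], hπ⟩
    rw [arg_eq, if_pos hθ]
  · have arg_eq : Complex.arg (Complex.exp (θ * Complex.I)) = θ - 2 * π := by
      rw [← Complex.exp_periodic.sub_eq, ← sub_mul, Complex.exp_mul_I]
      exact_mod_cast Complex.arg_cos_add_sin_mul_I (θ := θ - 2 * π)
        ⟨by linarith, by linarith⟩
    rw [arg_eq, if_neg (by linarith), sub_add_cancel]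

section FirstCone

variable {s t : ℝ}

lemma arg_hexPt_mem_Ioo (hs : 0 < s) (ht : 0 < t) :
    Complex.arg (hexPt s t) ∈ Set.Ioo 0 (π / 3) := by
  have sqrt_three_pos : 0 < √3 := by positivity
  have cos_eq := Complex.norm_mul_cos_arg (hexPt s t)
  have sin_eq := Complex.norm_mul_sin_arg (hexPt s t)
  rw [hexPt_re] at cos_eq
  rw [hexPt_im] at sin_eq
  have arg_nonneg : 0 ≤ Complex.arg (hexPt s t) :=
    Complex.arg_nonneg_iff.mpr (by rw [hexPt_im]; positivity)
  refine ⟨arg_nonneg.lt_of_ne fun arg_eq => ?_, lt_of_not_ge fun arg_ge => ?_⟩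
  · rw [← arg_eq, sin_zero, mul_zero] at sin_eq
    have : 0 < √3 / 2 * t := by positivity
    exact this.ne sin_eq
  · have sin_nonpos : Real.sin (π / 3 - Complex.arg (hexPt s t)) ≤ 0 :=
      Real.sin_nonpos_of_nonpos_of_neg_pi_le (by linarith)
        (by linarith [Complex.arg_le_pi (hexPt s t), pi_pos])
    rw [Real.sin_sub, cos_pi_div_three, sin_pi_div_three] at sin_nonpos
    have := mul_nonpos_of_nonneg_of_nonpos (norm_nonneg (hexPt s t)) sin_nonpos
    nlinarith [mul_pos sqrt_three_pos hs]

lemma argIn_hexPt_mul_sixthRoot_pow (hs : 0 < s) (ht : 0 < t) {j : ℕ} (hj : j < 6) :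
    argIn (hexPt s t * sixthRoot ^ j) = j * (π / 3) + Complex.arg (hexPt s t) := by
  obtain ⟨arg_pos, arg_lt⟩ := arg_hexPt_mem_Ioo hs ht
  have norm_pos : 0 < ‖hexPt s t‖ := norm_pos_iff.mpr fun h => by simp [h] at arg_pos
  have hj' : (j : ℝ) + 1 ≤ 6 := by exact_mod_cast hj
  have polar : hexPt s t * sixthRoot ^ j = (‖hexPt s t‖ : ℂ) *
      Complex.exp ((j * (π / 3) + Complex.arg (hexPt s t) : ℝ) * Complex.I) := by
    rw [sixthRoot_pow]
    conv_lhs => rw [← Complex.norm_mul_exp_arg_mul_I (hexPt s t)]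
    rw [mul_assoc, ← Complex.exp_add, Complex.ofReal_add]
    ring_nf
  rw [polar, argIn_polar norm_pos (by positivity) (by nlinarith [pi_pos])]

variable {u v : ℂ} {j : ℕ}

lemma coneIdx_eq_of_sub_eq (hs : 0 < s) (ht : 0 < t) (hj : j < 6)
    (huv : v - u = hexPt s t * sixthRoot ^ j) : coneIdx u v = j + 1 := by
  obtain ⟨arg_pos, arg_lt⟩ := arg_hexPt_mem_Ioo hs ht
  have floor_eq : ⌊(j * (π / 3) + Complex.arg (hexPt s t)) / (π / 3)⌋ = (j : ℤ) := by
    rw [Int.floor_eq_iff, le_div_iff₀ (by positivity), div_lt_iff₀ (by positivity)]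
    push_cast
    constructor <;> linarith
  rw [coneIdx, huv, argIn_hexPt_mul_sixthRoot_pow hs ht hj, floor_eq, Int.toNat_natCast]

lemma projDist_eq_of_sub_eq (hs : 0 < s) (ht : 0 < t) (hj : j < 6)
    (huv : v - u = hexPt s t * sixthRoot ^ j) : projDist u v = √3 / 2 * (s + t) := by
  have rotate : sixthRoot ^ j * Complex.exp (-(Complex.I * (bisAngle u v : ℂ))) =
      Complex.exp ((-(π / 6) : ℝ) * Complex.I) := by
    rw [bisAngle, coneIdx_eq_of_sub_eq hs ht hj huv, sixthRoot_pow, ← Complex.exp_add]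
    push_cast
    ring_nf
  have rotate_sixthRoot : sixthRoot * Complex.exp ((-(π / 6) : ℝ) * Complex.I) =
      Complex.exp ((π / 6 : ℝ) * Complex.I) := by
    rw [sixthRoot, ← Complex.exp_add]
    push_cast
    ring_nf
  rw [projDist, huv, mul_assoc, rotate, hexPt, add_mul, mul_assoc, rotate_sixthRoot,
    Complex.add_re, Complex.re_ofReal_mul, Complex.re_ofReal_mul, Complex.exp_ofReal_mul_I_re,
    Complex.exp_ofReal_mul_I_re, Real.cos_neg, cos_pi_div_six]
  ring

end FirstCone

section Generic

variable {x y : ℝ} {u v : ℂ}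

lemma exists_rotation_to_first_cone (hx : x ≠ 0) (hy : y ≠ 0) (hxy : x + y ≠ 0) :
    ∃ j < 6, ∃ s > 0, ∃ t > 0, hexPt x y = hexPt s t * sixthRoot ^ j ∧
      hexNorm x y = s + t ∧ sector x y = j + 1 := by
  simp only [hexNorm, sector]
  rcases hx.lt_or_gt with hx | hx <;> rcases hy.lt_or_gt with hy | hy <;>
    rcases hxy.lt_or_gt with hxy | hxy <;>
    simp only [abs_of_pos, abs_of_neg, hx, hy, hxy, hx.not_gt, hy.not_gt, hxy.not_gt, if_true,
      if_false]
  · refine ⟨3, by simp, -x, by linarith, -y, by linarith, ?_, by grind, rfl⟩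
    simp only [hexPt_mul_sixthRoot_pow_succ, pow_zero, mul_one]
    ring_nf
  · linarith
  · refine ⟨2, by simp, y, hy, -x - y, by linarith, ?_, by grind, rfl⟩
    simp only [hexPt_mul_sixthRoot_pow_succ, pow_zero, mul_one]
    ring_nf
  · refine ⟨1, by simp, x + y, hxy, -x, by linarith, ?_, by grind, rfl⟩
    simp only [hexPt_mul_sixthRoot_pow_succ, pow_zero, mul_one]
    ring_nf
  · refine ⟨4, by simp, -x - y, by linarith, x, hx, ?_, by grind, rfl⟩
    simp only [hexPt_mul_sixthRoot_pow_succ, pow_zero, mul_one]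
    ring_nf
  · refine ⟨5, by simp, -y, by linarith, x + y, hxy, ?_, by grind, rfl⟩
    simp only [hexPt_mul_sixthRoot_pow_succ, pow_zero, mul_one]
    ring_nf
  · linarith
  · exact ⟨0, by simp, x, hx, y, hy, by simp, by grind, rfl⟩

lemma coneIdx_eq_sector (hx : x ≠ 0) (hy : y ≠ 0) (hxy : x + y ≠ 0)
    (huv : v - u = hexPt x y) : coneIdx u v = sector x y := by
  obtain ⟨j, hj, s, hs, t, ht, rotation, -, sector_eq⟩ := exists_rotation_to_first_cone hx hy hxy
  rw [sector_eq, coneIdx_eq_of_sub_eq hs ht hj (huv.trans rotation)]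

lemma projDist_eq_hexNorm (hx : x ≠ 0) (hy : y ≠ 0) (hxy : x + y ≠ 0)
    (huv : v - u = hexPt x y) : projDist u v = √3 / 2 * hexNorm x y := by
  obtain ⟨j, hj, s, hs, t, ht, rotation, norm_eq, -⟩ := exists_rotation_to_first_cone hx hy hxy
  rw [norm_eq, projDist_eq_of_sub_eq hs ht hj (huv.trans rotation)]

lemma argIn_hexPt_ne (hx : x ≠ 0) (hy : y ≠ 0) (hxy : x + y ≠ 0) (k : ℕ) :
    argIn (hexPt x y) ≠ k * (π / 3) := by
  obtain ⟨j, hj, s, hs, t, ht, rotation, -, -⟩ := exists_rotation_to_first_cone hx hy hxy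
  obtain ⟨arg_pos, arg_lt⟩ := arg_hexPt_mem_Ioo hs ht
  rw [rotation, argIn_hexPt_mul_sixthRoot_pow hs ht hj]
  intro h
  have lower : (j : ℝ) < k := by nlinarith [pi_pos]
  have upper : (k : ℝ) < j + 1 := by nlinarith [pi_pos]
  norm_cast at lower upper
  omega

end Generic

lemma argIn_nonneg (z : ℂ) : 0 ≤ argIn z := by
  unfold argIn
  split_ifs with h
  · exact h
  · linarith [Complex.neg_pi_lt_arg z, pi_pos]

lemma mem_cone_coneIdx_iff {u v p : ℂ} :
    p ∈ cone (coneIdx u v) u ↔ p ≠ u ∧ coneIdx u p = coneIdx u v := by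
  have floor_nonneg (z : ℂ) : 0 ≤ ⌊argIn z / (π / 3)⌋ :=
    Int.floor_nonneg.mpr (div_nonneg (argIn_nonneg z) (by positivity))
  obtain ⟨m, hm⟩ := Int.eq_ofNat_of_zero_le (floor_nonneg (v - u))
  obtain ⟨l, hl⟩ := Int.eq_ofNat_of_zero_le (floor_nonneg (p - u))
  have floor_iff := Int.floor_eq_iff (a := argIn (p - u) / (π / 3)) (z := m)
  rw [le_div_iff₀ (by positivity), div_lt_iff₀ (by positivity), hl] at floor_iff
  have idx_iff : coneIdx u p = coneIdx u v ↔ (l : ℤ) = m := by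
    rw [coneIdx, coneIdx, hl, hm]
    simp
  rw [idx_iff, floor_iff]
  simp [cone, coneIdx, hm]

/-! ### The order type of a generic point set determines its graphs -/

/-- The strict order of `f a` and `f b` is the same as that of `f u` and `f v`. -/
def SameDir {ι α : Type*} [LT α] (f : ι → α) (u v a b : ι) : Prop :=
  f u < f v ∧ f a < f b ∨ f v < f u ∧ f b < f a

/-- The order-theoretic form of `w` lying in the same cone of `u` as `v` and being closer to `u`.
The point `w` has to lie in the direction of `v` from `u` for all three orders, and before `v` for
two of them: inside a cone one of the coordinates `x`, `y`, `x + y` is, in absolute value, the sum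
of the two others, and it is proportional to the projective distance. -/
def Precedes {ι α : Type*} [LT α] (x y z : ι → α) (u v w : ι) : Prop :=
  (SameDir x u v u w ∧ SameDir y u v u w ∧ SameDir z u v u w) ∧
    (SameDir x u v w v ∧ SameDir y u v w v ∨ SameDir x u v w v ∧ SameDir z u v w v ∨
      SameDir y u v w v ∧ SameDir z u v w v)

instance {ι α : Type*} [LinearOrder α] (f : ι → α) (u v a b : ι) : Decidable (SameDir f u v a b) :=
  inferInstanceAs (Decidable (_ ∨ _))

instance {ι α : Type*} [LinearOrder α] (x y z : ι → α) (u v w : ι) :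
    Decidable (Precedes x y z u v w) :=
  inferInstanceAs (Decidable (_ ∧ _))

lemma sector_eq_sector_iff {x y x' y' : ℝ} :
    sector x' y' = sector x y ↔
      (0 < x ↔ 0 < x') ∧ (0 < y ↔ 0 < y') ∧ (0 < x + y ↔ 0 < x' + y') := by
  unfold sector
  grind

lemma hexNorm_lt_hexNorm_iff {x y x' y' : ℝ} (hx : 0 < x ↔ 0 < x') (hy : 0 < y ↔ 0 < y')
    (hxy : 0 < x + y ↔ 0 < x' + y') :
    hexNorm x' y' < hexNorm x y ↔ |x'| < |x| ∧ |y'| < |y| ∨ |x'| < |x| ∧ |x' + y'| < |x + y| ∨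
      |y'| < |y| ∧ |x' + y'| < |x + y| := by
  unfold hexNorm
  rcases lt_or_ge 0 x with h | h <;> rcases lt_or_ge 0 y with h' | h' <;>
    rcases lt_or_ge 0 (x + y) with h'' | h'' <;>
    simp only [h, h', h'', h.not_gt, h'.not_gt, h''.not_gt, true_iff, false_iff, not_lt]
      at hx hy hxy <;>
    simp only [abs_of_pos, abs_of_nonpos, *, max_def] <;> grind

lemma sameDir_iff_pos_iff_pos {ι : Type*} {f : ι → ℝ} {u v w : ι} (huv : f u ≠ f v)
    (huw : f u ≠ f w) : SameDir f u v u w ↔ (0 < f v - f u ↔ 0 < f w - f u) := by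
  rw [SameDir, sub_pos, sub_pos]
  grind

lemma SameDir.iff_abs_lt {ι : Type*} {f : ι → ℝ} {u v w : ι} (h : SameDir f u v u w) :
    SameDir f u v w v ↔ |f w - f u| < |f v - f u| := by
  rcases h with ⟨huv, huw⟩ | ⟨huv, huw⟩
  · rw [SameDir, abs_of_pos (sub_pos.mpr huv), abs_of_pos (sub_pos.mpr huw)]
    grind
  · rw [SameDir, abs_of_neg (sub_neg.mpr huv), abs_of_neg (sub_neg.mpr huw)]
    grind

lemma injective_of_lt_iff_lt {ι α β : Type*} [LinearOrder α] [Preorder β] {f : ι → β} {r : ι → α}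
    (hlt : ∀ i j, f i < f j ↔ r i < r j) (hr : Function.Injective r) : Function.Injective f := by
  intro i j hij
  by_contra hne
  rcases (hr.ne hne).lt_or_gt with h | h <;> rw [← hlt, hij] at h <;> exact h.false

/-- The point configuration with hexagonal coordinates `x i`, `y i`. -/
def hexMap {ι : Type*} (x y : ι → ℝ) (i : ι) : ℂ := hexPt (x i) (y i)

/-- The injective functions `rx`, `ry` and `rz` rank the points `hexMap x y i` by their coordinates
`x`, `y` and `x + y`, none of which can then take the same value at two points. -/
structure IsHexRanking {ι α : Type*} [LinearOrder α] (x y : ι → ℝ) (rx ry rz : ι → α) : Prop where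
  x_lt_iff (i j : ι) : x i < x j ↔ rx i < rx j
  y_lt_iff (i j : ι) : y i < y j ↔ ry i < ry j
  add_lt_iff (i j : ι) : x i + y i < x j + y j ↔ rz i < rz j
  rx_injective : Function.Injective rx
  ry_injective : Function.Injective ry
  rz_injective : Function.Injective rz

/-- The ranks `rx`, `ry`, `rz` exclude that `u → v` is an edge of `ΘΘ₆` of the points indexed by
`I`: either some point precedes `v` as seen from `u`, or some edge `w → v` of `Θ₆` has a source `w`
that precedes `u` as seen from `v`. -/
def Blocked {ι α : Type*} [LT α] (rx ry rz : ι → α) (I : Finset ι) (u v : ι) : Prop :=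
  (∃ w ∈ I, Precedes rx ry rz u v w) ∨
    ∃ w ∈ I, (∀ i ∈ I, ¬ Precedes rx ry rz w v i) ∧ Precedes rx ry rz v u w

lemma Precedes.ne {ι α : Type*} [Preorder α] {rx ry rz : ι → α} {u v w : ι}
    (h : Precedes rx ry rz u v w) : u ≠ v ∧ u ≠ w ∧ w ≠ v := by
  refine ⟨?_, ?_, ?_⟩ <;> rintro rfl <;> simp [Precedes, SameDir] at h

lemma Precedes.swap {ι α : Type*} [LT α] {x y z : ι → α} {u v w : ι}
    (h : Precedes x y z u v w) : Precedes y x z u v w :=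
  let ⟨⟨hx, hy, hz⟩, majority⟩ := h
  ⟨⟨hy, hx, hz⟩, by tauto⟩

namespace IsHexRanking

variable {ι α : Type*} [LinearOrder α] {x y : ι → ℝ} {rx ry rz : ι → α} {u v w : ι}

lemma x_injective (h : IsHexRanking x y rx ry rz) : Function.Injective x :=
  injective_of_lt_iff_lt h.x_lt_iff h.rx_injective

lemma y_injective (h : IsHexRanking x y rx ry rz) : Function.Injective y :=
  injective_of_lt_iff_lt h.y_lt_iff h.ry_injective

lemma add_injective (h : IsHexRanking x y rx ry rz) : Function.Injective fun i => x i + y i :=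
  injective_of_lt_iff_lt h.add_lt_iff h.rz_injective

lemma coords_sub_ne_zero (h : IsHexRanking x y rx ry rz) (huv : u ≠ v) :
    x v - x u ≠ 0 ∧ y v - y u ≠ 0 ∧ x v - x u + (y v - y u) ≠ 0 := by
  rw [sub_add_sub_comm]
  exact ⟨sub_ne_zero.mpr (h.x_injective.ne huv.symm), sub_ne_zero.mpr (h.y_injective.ne huv.symm),
    sub_ne_zero.mpr (h.add_injective.ne huv.symm)⟩

lemma coneIdx_hexMap (h : IsHexRanking x y rx ry rz) (huv : u ≠ v) :
    coneIdx (hexMap x y u) (hexMap x y v) = sector (x v - x u) (y v - y u) := by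
  obtain ⟨hx, hy, hxy⟩ := h.coords_sub_ne_zero huv
  exact coneIdx_eq_sector hx hy hxy (hexPt_sub _ _ _ _)

lemma projDist_hexMap (h : IsHexRanking x y rx ry rz) (huv : u ≠ v) :
    projDist (hexMap x y u) (hexMap x y v) = √3 / 2 * hexNorm (x v - x u) (y v - y u) := by
  obtain ⟨hx, hy, hxy⟩ := h.coords_sub_ne_zero huv
  exact projDist_eq_hexNorm hx hy hxy (hexPt_sub _ _ _ _)

lemma projDist_hexMap_comm (h : IsHexRanking x y rx ry rz) (huv : u ≠ v) :
    projDist (hexMap x y u) (hexMap x y v) = projDist (hexMap x y v) (hexMap x y u) := by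
  rw [h.projDist_hexMap huv, h.projDist_hexMap huv.symm, ← hexNorm_neg, neg_sub, neg_sub]

lemma hexMap_injective (h : IsHexRanking x y rx ry rz) : Function.Injective (hexMap x y) := by
  intro u v huv
  have im_eq := congrArg Complex.im huv
  rw [hexMap, hexMap, hexPt_im, hexPt_im] at im_eq
  exact h.y_injective (mul_left_cancel₀ (by positivity) im_eq)

lemma genPos (h : IsHexRanking x y rx ry rz) (I : Finset ι) : GenPos (I.image (hexMap x y)) := by
  simp only [GenPos, Finset.forall_mem_image]
  intro u _ v _ huv j
  obtain ⟨hx, hy, hxy⟩ := h.coords_sub_ne_zero (ne_of_apply_ne _ huv)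
  rw [hexMap, hexMap, hexPt_sub]
  exact argIn_hexPt_ne hx hy hxy j

lemma precedes_iff (h : IsHexRanking x y rx ry rz) (huv : u ≠ v) (huw : u ≠ w) :
    Precedes rx ry rz u v w ↔
      coneIdx (hexMap x y u) (hexMap x y w) = coneIdx (hexMap x y u) (hexMap x y v) ∧
      projDist (hexMap x y u) (hexMap x y w) < projDist (hexMap x y u) (hexMap x y v) := by
  have real_iff : Precedes rx ry rz u v w ↔ Precedes x y (fun i => x i + y i) u v w := by
    simp only [Precedes, SameDir, h.x_lt_iff, h.y_lt_iff, h.add_lt_iff]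
  have hx := sameDir_iff_pos_iff_pos (h.x_injective.ne huv) (h.x_injective.ne huw)
  have hy := sameDir_iff_pos_iff_pos (h.y_injective.ne huv) (h.y_injective.ne huw)
  have hxy := sameDir_iff_pos_iff_pos (f := fun i => x i + y i) (h.add_injective.ne huv)
    (h.add_injective.ne huw)
  simp only [add_sub_add_comm] at hxy
  rw [real_iff, h.coneIdx_hexMap huv, h.coneIdx_hexMap huw, h.projDist_hexMap huv,
    h.projDist_hexMap huw, mul_lt_mul_iff_right₀ (by positivity), sector_eq_sector_iff, Precedes,
    ← hx, ← hy, ← hxy]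
  refine and_congr_right fun ⟨dir_x, dir_y, dir_xy⟩ => ?_
  rw [dir_x.iff_abs_lt, dir_y.iff_abs_lt, dir_xy.iff_abs_lt, add_sub_add_comm, add_sub_add_comm,
    hexNorm_lt_hexNorm_iff (hx.mp dir_x) (hy.mp dir_y) (hxy.mp dir_xy)]

variable {I : Finset ι}

lemma thetaEdge_iff (h : IsHexRanking x y rx ry rz) (hu : u ∈ I) (hv : v ∈ I) (huv : u ≠ v) :
    ThetaEdge (I.image (hexMap x y)) (hexMap x y u) (hexMap x y v) ↔
      ∀ w ∈ I, ¬ Precedes rx ry rz u v w := by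
  have mem {i : ι} (hi : i ∈ I) := Finset.mem_image_of_mem (hexMap x y) hi
  simp only [ThetaEdge, mem hu, mem hv, h.hexMap_injective.ne huv.symm, ne_eq, not_false_eq_true,
    true_and, Finset.forall_mem_image, mem_cone_coneIdx_iff]
  refine forall₂_congr fun w hw => ?_
  rcases eq_or_ne u w with rfl | huw
  · simpa using fun hprec : Precedes rx ry rz u v u => hprec.ne.2.1 rfl
  · rw [h.precedes_iff huv huw, not_and, not_lt, h.hexMap_injective.eq_iff]
    exact ⟨fun hle hidx => hle ⟨huw.symm, hidx⟩, fun hle hidx => hle hidx.2⟩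

lemma not_blocked_of_thetaThetaEdge (h : IsHexRanking x y rx ry rz) (hu : u ∈ I) (hv : v ∈ I)
    (huv : ThetaThetaEdge (I.image (hexMap x y)) (hexMap x y u) (hexMap x y v)) :
    ¬ Blocked rx ry rz I u v := by
  obtain ⟨theta, incoming⟩ := huv
  have hne : u ≠ v := fun heq => theta.2.2.1 (congrArg _ heq.symm)
  rintro (⟨w, hw, hprec⟩ | ⟨w, hw, hmin, hprec⟩)
  · exact (h.thetaEdge_iff hu hv hne).mp theta w hw hprec
  · obtain ⟨-, hvw, -⟩ := hprec.ne
    have theta' := (h.thetaEdge_iff hw hv hvw.symm).mpr hmin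
    obtain ⟨same_cone, closer⟩ := (h.precedes_iff hne.symm hvw).mp hprec
    rw [← h.projDist_hexMap_comm hne, ← h.projDist_hexMap_comm hvw.symm] at closer
    exact (incoming _ theta' same_cone).not_gt closer

end IsHexRanking

/-! ### Ranks of the double spiral -/

/-- The ranks, relative to `8 * k`, of the four points of level `k` for the coordinate `x` if `k` is
even and for `y` if `k` is odd. A rank `8 * q + s` with `s < 8` stands for the `s`-th position on
the `q`-th rail (see `coord`): up to small perturbations, the points `0`, `1`, `2` have the same
coordinates. -/
def axisOffset : Fin 4 → ℕ := ![21, 23, 17, 3]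

/-- The analogue of `axisOffset` for the other coordinate: `y` if the level is even and `x` if it is
odd. -/
def crossOffset : Fin 4 → ℕ := ![10, 12, 14, 24]

/-- The rank of the first coordinate of the `i.2`-th point of level `i.1` of the double spiral. -/
def rankX (i : ℕ × Fin 4) : ℕ := 8 * i.1 + if i.1 % 2 = 0 then axisOffset i.2 else crossOffset i.2

/-- The rank of the second coordinate. -/
def rankY (i : ℕ × Fin 4) : ℕ := 8 * i.1 + if i.1 % 2 = 0 then crossOffset i.2 else axisOffset i.2

/-- The rank of the sum of the two coordinates: the points are numbered in this order. -/
def rankZ (i : ℕ × Fin 4) : ℕ := 4 * i.1 + i.2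

lemma rankX_succ (k : ℕ) (c : Fin 4) : rankX (k + 1, c) = rankY (k, c) + 8 := by
  rcases Nat.mod_two_eq_zero_or_one k with h | h <;> simp [rankX, rankY, Nat.add_mod, h] <;> ring

lemma rankY_succ (k : ℕ) (c : Fin 4) : rankY (k + 1, c) = rankX (k, c) + 8 := by
  rcases Nat.mod_two_eq_zero_or_one k with h | h <;> simp [rankX, rankY, Nat.add_mod, h] <;> ring

lemma rankZ_succ (k : ℕ) (c : Fin 4) : rankZ (k + 1, c) = rankZ (k, c) + 4 := by
  simp only [rankZ]
  ring

lemma rankX_injective : Function.Injective rankX := by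
  rintro ⟨k, a⟩ ⟨l, b⟩ h
  simp only [rankX, axisOffset, crossOffset] at h
  fin_cases a <;> fin_cases b <;> simp at h ⊢ <;> split_ifs at h <;> omega

lemma rankY_injective : Function.Injective rankY := by
  rintro ⟨k, a⟩ ⟨l, b⟩ h
  have := rankX_injective (a₁ := (k + 1, a)) (a₂ := (l + 1, b)) (by simp only [rankX_succ, h])
  simpa using this

lemma rankZ_injective : Function.Injective rankZ := by
  rintro ⟨k, a⟩ ⟨l, b⟩ h
  simp only [rankZ] at h
  ext <;> simp <;> omega

lemma precedes_add_level_iff {u v w : ℕ × Fin 4} (m : ℕ) :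
    Precedes rankX rankY rankZ (u.1 + m, u.2) (v.1 + m, v.2) (w.1 + m, w.2) ↔
      Precedes rankX rankY rankZ u v w := by
  induction m with
  | zero => rfl
  | succ m ih =>
    refine Iff.trans ?_ (Iff.trans ⟨Precedes.swap, Precedes.swap⟩ ih)
    simp only [Precedes, SameDir, ← add_assoc, rankX_succ, rankY_succ, rankZ_succ,
      add_lt_add_iff_right]

/-! ### Edges of the double spiral -/

/-- Three families of edges `w → v` of `Θ₆` of the double spiral. They are all that is needed to see
which other edges into `v` are discarded in `ΘΘ₆`. -/
def KeyEdge (w v : ℕ × Fin 4) : Prop :=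
  w.2 = 1 ∧ v = (w.1 + 1, 3) ∨ w.2 = 2 ∧ v = (w.1, 1) ∨ w.2 = 3 ∧ v = (w.1 + 1, 0)

instance (w v : ℕ × Fin 4) : Decidable (KeyEdge w v) := inferInstanceAs (Decidable (_ ∨ _))

/-- The point `w` excludes that `u → v` is an edge of `ΘΘ₆` of the double spiral. -/
def Blocks (w u v : ℕ × Fin 4) : Prop :=
  Precedes rankX rankY rankZ u v w ∨ KeyEdge w v ∧ Precedes rankX rankY rankZ v u w

instance (w u v : ℕ × Fin 4) : Decidable (Blocks w u v) := inferInstanceAs (Decidable (_ ∨ _))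

/-- The points `0`, `1`, `2` of a level form one cluster, and the point `3` another one. -/
def SameCluster (u v : ℕ × Fin 4) : Prop := u.1 = v.1 ∧ (u.2 = 3 ↔ v.2 = 3)

/-- The points `u` and `v` lie in consecutive clusters along the double spiral. From level to level,
each of its two arms alternates between the two kinds of clusters; the arms meet at level `0`. -/
def Linked (u v : ℕ × Fin 4) : Prop :=
  ¬ (u.2 = 3 ↔ v.2 = 3) ∧ (u.1 = v.1 + 1 ∨ v.1 = u.1 + 1 ∨ u.1 = 0 ∧ v.1 = 0)

instance (u v : ℕ × Fin 4) : Decidable (SameCluster u v) := inferInstanceAs (Decidable (_ ∧ _))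

instance (u v : ℕ × Fin 4) : Decidable (Linked u v) := inferInstanceAs (Decidable (_ ∧ _))

/-- All three ranks of `u` are smaller than those of `v`. -/
def Below (u v : ℕ × Fin 4) : Prop := rankX u < rankX v ∧ rankY u < rankY v ∧ rankZ u < rankZ v

instance (u v : ℕ × Fin 4) : Decidable (Below u v) := inferInstanceAs (Decidable (_ ∧ _))

lemma below_of_level_add_three_le {u v : ℕ × Fin 4} (h : u.1 + 3 ≤ v.1) : Below u v := by
  have axis_bounds : ∀ c, 3 ≤ axisOffset c ∧ axisOffset c ≤ 23 := by decide
  have cross_bounds : ∀ c, 10 ≤ crossOffset c ∧ crossOffset c ≤ 24 := by decide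
  have := axis_bounds u.2
  have := axis_bounds v.2
  have := cross_bounds u.2
  have := cross_bounds v.2
  unfold Below rankX rankY rankZ
  refine ⟨?_, ?_, ?_⟩ <;> (try split_ifs) <;> omega

lemma Below.precedes {u w v : ℕ × Fin 4} (huw : Below u w) (hwv : Below w v) :
    Precedes rankX rankY rankZ u v w ∧ Precedes rankX rankY rankZ v u w := by
  unfold Below at huw hwv
  unfold Precedes SameDir
  omega

lemma not_precedes_of_below {u v w : ℕ × Fin 4}
    (h : Below u w ∧ Below v w ∨ Below w u ∧ Below w v) :
    ¬ Precedes rankX rankY rankZ u v w := by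
  unfold Below at h
  unfold Precedes SameDir
  omega

lemma below_add_level_iff {u v : ℕ × Fin 4} (m : ℕ) :
    Below (u.1 + m, u.2) (v.1 + m, v.2) ↔ Below u v := by
  induction m with
  | zero => rfl
  | succ m ih =>
    rw [← ih]
    simp only [Below, ← add_assoc, rankX_succ, rankY_succ, rankZ_succ, add_lt_add_iff_right]
    tauto

lemma exists_above (u : ℕ × Fin 4) : ∃ w, w.1 ≤ u.1 + 2 ∧ Below u w := by
  have base : ∀ c, ∃ e : Fin 3, ∃ d, Below (0, c) (e, d) := by decide
  obtain ⟨e, d, h⟩ := base u.2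
  exact ⟨(e + u.1, d), by dsimp; omega, by simpa using (below_add_level_iff u.1).mpr h⟩

lemma exists_below (u : ℕ × Fin 4) (hu : 1 ≤ u.1) : ∃ w, w.1 + 1 = u.1 ∧ Below w u := by
  have base : ∀ c, ∃ d, Below (0, d) (1, c) := by decide
  obtain ⟨d, h⟩ := base u.2
  obtain ⟨⟨k, c⟩, rfl⟩ : ∃ i : ℕ × Fin 4, u = (1 + i.1, i.2) :=
    ⟨(u.1 - 1, u.2), by ext <;> simp; omega⟩
  exact ⟨(0 + k, d), by dsimp; omega, (below_add_level_iff k).mpr h⟩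

lemma KeyEdge.level_le {w v : ℕ × Fin 4} (h : KeyEdge w v) : w.1 ≤ v.1 ∧ v.1 ≤ w.1 + 1 := by
  rcases h with ⟨-, rfl⟩ | ⟨-, rfl⟩ | ⟨-, rfl⟩ <;> simp

lemma keyEdge_add_level_iff {w v : ℕ × Fin 4} (m : ℕ) :
    KeyEdge (w.1 + m, w.2) (v.1 + m, v.2) ↔ KeyEdge w v := by
  simp only [KeyEdge, Prod.ext_iff, add_right_comm _ m, add_left_inj]

lemma exists_fin_add_eq_of_close {k l N : ℕ} (hkl : k ≤ l + N) (hlk : l ≤ k + N) :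
    ∃ (k' l' : Fin (N + 1)) (m : ℕ), k = k' + m ∧ l = l' + m ∧ (m ≠ 0 → ↑k' = N ∨ ↑l' = N) :=
  ⟨⟨k - (max k l - N), by omega⟩, ⟨l - (max k l - N), by omega⟩, max k l - N, by
    dsimp only
    omega⟩

lemma KeyEdge.not_precedes {w v : ℕ × Fin 4} (h : KeyEdge w v) (i : ℕ × Fin 4) :
    ¬ Precedes rankX rankY rankZ w v i := by
  have window : ∀ (k j : Fin 4) (l : Fin 5) (a b c : Fin 4), KeyEdge (k, a) (l, b) →
      ¬ Precedes rankX rankY rankZ (k, a) (l, b) (j, c) := by decide +kernel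
  obtain ⟨hwv, hvw⟩ := h.level_le
  rcases le_or_gt (w.1 + 4) i.1 with hi | hi
  · exact not_precedes_of_below (.inl ⟨below_of_level_add_three_le (by omega),
      below_of_level_add_three_le (by omega)⟩)
  rcases le_or_gt (i.1 + 3) w.1 with hi' | hi'
  · exact not_precedes_of_below (.inr ⟨below_of_level_add_three_le hi',
      below_of_level_add_three_le (by omega)⟩)
  obtain ⟨w, a⟩ := w
  obtain ⟨v, b⟩ := v
  obtain ⟨i, c⟩ := i
  dsimp only at *
  obtain ⟨k, j, m, rfl, rfl, -⟩ := exists_fin_add_eq_of_close (k := w) (l := i) (N := 3)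
    (by omega) (by omega)
  obtain ⟨l, rfl⟩ : ∃ l : Fin 5, v = l + m := ⟨⟨v - m, by omega⟩, by dsimp only; omega⟩
  exact fun hprec => window k j l a b c ((keyEdge_add_level_iff m).mp h)
    ((precedes_add_level_iff m).mp hprec)

lemma Blocks.add_level {w u v : ℕ × Fin 4} (h : Blocks w u v) (m : ℕ) :
    Blocks (w.1 + m, w.2) (u.1 + m, u.2) (v.1 + m, v.2) :=
  h.imp (precedes_add_level_iff m).mpr
    (And.imp (keyEdge_add_level_iff m).mpr (precedes_add_level_iff m).mpr)

lemma exists_blocks_of_close {u v : ℕ × Fin 4} (huv : u.1 ≤ v.1 + 4) (hvu : v.1 ≤ u.1 + 4)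
    (hcluster : ¬ SameCluster u v) (hlinked : ¬ Linked u v) :
    ∃ w : ℕ × Fin 4, w.1 ≤ max u.1 v.1 ∧ Blocks w u v := by
  have window : ∀ (k l : Fin 5) (a b : Fin 4),
      ¬ SameCluster (k, a) (l, b) → ¬ Linked (k, a) (l, b) →
        ∃ e : Fin 5, e ≤ max k l ∧ ∃ c : Fin 4, Blocks (e, c) (k, a) (l, b) := by
    decide +kernel
  obtain ⟨u, a⟩ := u
  obtain ⟨v, b⟩ := v
  obtain ⟨k, l, m, rfl, rfl, hm⟩ := exists_fin_add_eq_of_close huv hvu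
  obtain ⟨e, he, c, h⟩ := window k l a b
    (fun h => hcluster (by simpa [SameCluster] using h))
    (fun h => hlinked (by
      unfold Linked at h ⊢
      dsimp only at h ⊢
      exact ⟨h.1, by omega⟩))
  refine ⟨(e + m, c), ?_, h.add_level m⟩
  simp only [le_max_iff, add_le_add_iff_right, Fin.val_fin_le] at he ⊢
  exact he

lemma exists_blocks {u v : ℕ × Fin 4} (hcluster : ¬ SameCluster u v) (hlinked : ¬ Linked u v) :
    ∃ w : ℕ × Fin 4, w.1 ≤ max u.1 v.1 ∧ Blocks w u v := by
  rcases le_or_gt (u.1 + 5) v.1 with huv | huv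
  · obtain ⟨w, hw, h⟩ := exists_above u
    exact ⟨w, by omega, .inl (h.precedes (below_of_level_add_three_le (by omega))).1⟩
  rcases le_or_gt (v.1 + 5) u.1 with hvu | hvu
  · obtain ⟨w, hw, h⟩ := exists_below u (by omega)
    exact ⟨w, by omega, .inl ((below_of_level_add_three_le (by omega)).precedes h).2⟩
  exact exists_blocks_of_close (by omega) (by omega) hcluster hlinked

/-- The indices of the `4 * n` points of the first `n` levels of the double spiral. -/
def spiralIndices (n : ℕ) : Finset (ℕ × Fin 4) := Finset.range n ×ˢ Finset.univ

lemma mem_spiralIndices {n : ℕ} {i : ℕ × Fin 4} : i ∈ spiralIndices n ↔ i.1 < n := by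
  simp [spiralIndices]

lemma sameCluster_or_linked_of_not_blocked {n : ℕ} {u v : ℕ × Fin 4} (hu : u ∈ spiralIndices n)
    (hv : v ∈ spiralIndices n) (h : ¬ Blocked rankX rankY rankZ (spiralIndices n) u v) :
    SameCluster u v ∨ Linked u v := by
  contrapose! h
  rw [mem_spiralIndices] at hu hv
  obtain ⟨w, hw, hprec | ⟨hkey, hprec⟩⟩ := exists_blocks h.1 h.2
  · exact .inl ⟨w, mem_spiralIndices.mpr (by omega), hprec⟩
  · exact .inr ⟨w, mem_spiralIndices.mpr (by omega), fun i _ => hkey.not_precedes i, hprec⟩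

/-! ### Realising the ranks by points -/

/-- Turns a rank into a coordinate: for `s < 8` the rank `8 * q + s` stands for the `s`-th position
on the `q`-th rail, a small neighbourhood of the integer `q` in which consecutive positions are
`η / 4 ^ q` apart. -/
def coord (η : ℝ) (r : ℕ) : ℝ := (r / 8 : ℕ) + (r % 8 : ℕ) * (η / 4 ^ (r / 8))

/-- The first hexagonal coordinates of the points of the double spiral. -/
def spiralX (η : ℝ) (i : ℕ × Fin 4) : ℝ := coord η (rankX i)

/-- The second hexagonal coordinates of the points of the double spiral. -/
def spiralY (η : ℝ) (i : ℕ × Fin 4) : ℝ := coord η (rankY i)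

/-- The points of the double spiral. -/
abbrev spiralPoint (η : ℝ) : ℕ × Fin 4 → ℂ := hexMap (spiralX η) (spiralY η)

/-- How far the sum of the two coordinates of a point of level `k` exceeds `2 * k + 3`, in units of
`η / 4 ^ (k + 2)`. The offsets of the ranks were chosen to make this increasing. -/
def sumOffset : Fin 4 → ℕ := ![13, 23, 25, 48]

lemma coord_eq (η : ℝ) (q : ℕ) {s : ℕ} (hs : s < 8) :
    coord η (8 * q + s) = q + s * (η / 4 ^ q) := by
  rw [coord, show (8 * q + s) / 8 = q by omega, show (8 * q + s) % 8 = s by omega]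

lemma strictMono_coord {η : ℝ} (hη : 0 < η) (hη' : 7 * η < 1) : StrictMono (coord η) := by
  refine strictMono_nat_of_lt_succ fun r => ?_
  have gap_le : η / 4 ^ (r / 8) ≤ η := div_le_self hη.le (one_le_pow₀ (by norm_num))
  rcases (show r % 8 < 7 ∨ r % 8 = 7 by omega) with h | h
  · have same_rail : (r + 1) / 8 = r / 8 ∧ (r + 1) % 8 = r % 8 + 1 := by omega
    rw [coord, coord, same_rail.1, same_rail.2]
    gcongr
    omega
  · have next_rail : (r + 1) / 8 = r / 8 + 1 ∧ (r + 1) % 8 = 0 := by omega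
    rw [coord, coord, next_rail.1, next_rail.2, h]
    push_cast
    linarith

lemma coord_axis_add_coord_cross (η : ℝ) (k : ℕ) (c : Fin 4) :
    coord η (8 * k + axisOffset c) + coord η (8 * k + crossOffset c) =
      2 * k + 3 + sumOffset c * (η / 4 ^ (k + 2)) := by
  fin_cases c <;> [
    change coord η (8 * (k + 2) + 5) + coord η (8 * (k + 1) + 2) = 2 * k + 3 + (13 : ℕ) * _;
    change coord η (8 * (k + 2) + 7) + coord η (8 * (k + 1) + 4) = 2 * k + 3 + (23 : ℕ) * _;
    change coord η (8 * (k + 2) + 1) + coord η (8 * (k + 1) + 6) = 2 * k + 3 + (25 : ℕ) * _;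
    change coord η (8 * k + 3) + coord η (8 * (k + 3) + 0) = 2 * k + 3 + (48 : ℕ) * _] <;>
  · rw [coord_eq _ _ (by norm_num), coord_eq _ _ (by norm_num)]
    push_cast
    field_simp
    ring

lemma spiralX_add_spiralY (η : ℝ) (i : ℕ × Fin 4) :
    spiralX η i + spiralY η i = 2 * i.1 + 3 + sumOffset i.2 * (η / 4 ^ (i.1 + 2)) := by
  rw [← coord_axis_add_coord_cross, spiralX, spiralY, rankX, rankY]
  split_ifs
  · rfl
  · exact add_comm _ _

lemma spiralX_add_spiralY_lt {η : ℝ} (hη : 0 < η) (hη' : 7 * η < 1) {i j : ℕ × Fin 4}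
    (hij : rankZ i < rankZ j) : spiralX η i + spiralY η i < spiralX η j + spiralY η j := by
  obtain ⟨k, a⟩ := i
  obtain ⟨l, b⟩ := j
  rw [spiralX_add_spiralY, spiralX_add_spiralY]
  simp only [rankZ] at hij
  rcases (show k < l ∨ k = l ∧ a < b by omega) with hkl | ⟨rfl, hab⟩
  · have offset_le : sumOffset a ≤ 48 := by clear hij; decide +revert
    have level_le : (k : ℝ) + 1 ≤ l := mod_cast hkl
    calc 2 * (k : ℝ) + 3 + sumOffset a * (η / 4 ^ (k + 2))
        ≤ 2 * k + 3 + (48 : ℕ) * (η / 4 ^ 2) := by gcongr <;> [norm_num; omega]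
      _ < 2 * l + 3 := by push_cast; linarith
      _ ≤ 2 * l + 3 + sumOffset b * (η / 4 ^ (l + 2)) := le_add_of_nonneg_right (by positivity)
  · have offset_lt : sumOffset a < sumOffset b := by clear hij; decide +revert
    gcongr

lemma isHexRanking_spiral {η : ℝ} (hη : 0 < η) (hη' : 7 * η < 1) :
    IsHexRanking (spiralX η) (spiralY η) rankX rankY rankZ where
  x_lt_iff _ _ := (strictMono_coord hη hη').lt_iff_lt
  y_lt_iff _ _ := (strictMono_coord hη hη').lt_iff_lt
  add_lt_iff i j := by
    refine ⟨fun h => ?_, spiralX_add_spiralY_lt hη hη'⟩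
    by_contra! hji
    rcases hji.eq_or_lt with heq | hlt
    · exact h.ne (by rw [rankZ_injective heq])
    · exact h.not_gt (spiralX_add_spiralY_lt hη hη' hlt)
  rx_injective := rankX_injective
  ry_injective := rankY_injective
  rz_injective := rankZ_injective

/-! ### The length of a path -/

/-- The limit, as `η → 0`, of the points of the double spiral. -/
def site (i : ℕ × Fin 4) : ℂ := hexPt (rankX i / 8 : ℕ) (rankY i / 8 : ℕ)

/-- The position of a point along the double spiral, counted in clusters from the place where the
two arms meet, and with opposite signs on the two arms. -/
def spiralPotential (i : ℕ × Fin 4) : ℝ :=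
  (if i.2 = 3 then -1 else 1) * (-1) ^ i.1 * (i.1 + 1 / 2)

lemma abs_coord_sub_le {η : ℝ} (hη : 0 < η) (r : ℕ) : |coord η r - (r / 8 : ℕ)| ≤ 7 * η := by
  have gap_le : η / 4 ^ (r / 8) ≤ η := div_le_self hη.le (one_le_pow₀ (by norm_num))
  have pos_le : r % 8 ≤ 7 := by omega
  rw [coord, add_sub_cancel_left, abs_of_nonneg (by positivity)]
  gcongr
  exact_mod_cast pos_le

lemma dist_spiral_site_le {η : ℝ} (hη : 0 < η) (i : ℕ × Fin 4) :
    dist (spiralPoint η i) (site i) ≤ 14 * η := by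
  rw [dist_eq_norm, spiralPoint, hexMap, site, hexPt_sub]
  refine (norm_hexPt_le _ _).trans ?_
  have hx : |spiralX η i - (rankX i / 8 : ℕ)| ≤ 7 * η := abs_coord_sub_le hη (rankX i)
  have hy : |spiralY η i - (rankY i / 8 : ℕ)| ≤ 7 * η := abs_coord_sub_le hη (rankY i)
  linarith

lemma axisOffset_div_eight (c : Fin 4) : axisOffset c / 8 = if c = 3 then 0 else 2 := by
  decide +revert

lemma crossOffset_div_eight (c : Fin 4) : crossOffset c / 8 = if c = 3 then 3 else 1 := by
  decide +revert

lemma dist_site_eq_two_of_eq_three {u v : ℕ × Fin 4} (hu : u.2 = 3) (hv : v.2 ≠ 3)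
    (huv : u.1 ≤ v.1 + 1) (hvu : v.1 ≤ u.1 + 1) : dist (site u) (site v) = 2 := by
  have diff : rankX u / 8 = rankX v / 8 + 2 ∧ rankY u / 8 = rankY v / 8 ∨
      rankX v / 8 = rankX u / 8 + 2 ∧ rankY u / 8 = rankY v / 8 ∨
      rankX u / 8 = rankX v / 8 ∧ rankY u / 8 = rankY v / 8 + 2 ∨
      rankX u / 8 = rankX v / 8 ∧ rankY v / 8 = rankY u / 8 + 2 ∨
      rankX u / 8 = rankX v / 8 + 2 ∧ rankY v / 8 = rankY u / 8 + 2 ∨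
      rankX v / 8 = rankX u / 8 + 2 ∧ rankY u / 8 = rankY v / 8 + 2 := by
    simp only [rankX, rankY, Nat.mul_add_div (show 8 > 0 by norm_num), apply_ite (· / 8),
      axisOffset_div_eight, crossOffset_div_eight, hu, hv, if_true, if_false]
    split_ifs <;> omega
  rw [dist_eq_norm, site, site, hexPt_sub, norm_hexPt, ← Real.sqrt_sq zero_le_two]
  congr 1
  rcases diff with ⟨hx, hy⟩ | ⟨hx, hy⟩ | ⟨hx, hy⟩ | ⟨hx, hy⟩ | ⟨hx, hy⟩ | ⟨hx, hy⟩ <;>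
    simp only [hx, hy] <;> push_cast <;> ring

lemma dist_site_eq_two {u v : ℕ × Fin 4} (htype : ¬ (u.2 = 3 ↔ v.2 = 3)) (huv : u.1 ≤ v.1 + 1)
    (hvu : v.1 ≤ u.1 + 1) : dist (site u) (site v) = 2 := by
  by_cases hu : u.2 = 3
  · exact dist_site_eq_two_of_eq_three hu (by tauto) huv hvu
  · rw [dist_comm]
    exact dist_site_eq_two_of_eq_three (by tauto) hu hvu huv

lemma abs_dist_spiral_sub_two_le {η : ℝ} (hη : 0 < η) {u v : ℕ × Fin 4}
    (htype : ¬ (u.2 = 3 ↔ v.2 = 3)) (huv : u.1 ≤ v.1 + 1) (hvu : v.1 ≤ u.1 + 1) :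
    |dist (spiralPoint η u) (spiralPoint η v) - 2| ≤ 28 * η := by
  rw [← dist_site_eq_two htype huv hvu, ← Real.dist_eq]
  refine (dist_dist_dist_le _ _ _ _).trans ?_
  linarith [dist_spiral_site_le hη u, dist_spiral_site_le hη v]

lemma SameCluster.spiralPotential_eq {u v : ℕ × Fin 4} (h : SameCluster u v) :
    spiralPotential u = spiralPotential v := by
  rw [spiralPotential, spiralPotential, h.1, if_congr h.2 rfl rfl]

lemma Linked.level_le {u v : ℕ × Fin 4} (h : Linked u v) : u.1 ≤ v.1 + 1 ∧ v.1 ≤ u.1 + 1 := by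
  have := h.2
  omega

lemma Linked.abs_spiralPotential_sub {u v : ℕ × Fin 4} (h : Linked u v) :
    |spiralPotential u - spiralPotential v| = 1 := by
  obtain ⟨k, a⟩ := u
  obtain ⟨l, b⟩ := v
  obtain ⟨htype, hlevel⟩ := h
  dsimp only at htype hlevel
  have sign_eq : (if b = 3 then (-1 : ℝ) else 1) = -if a = 3 then -1 else 1 := by
    split_ifs <;> simp_all
  have abs_sign : |if a = 3 then (-1 : ℝ) else 1| = 1 := by split_ifs <;> simp
  obtain ⟨m, diff⟩ : ∃ m : ℕ, spiralPotential (k, a) - spiralPotential (l, b) =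
      (if a = 3 then -1 else 1) * (-1) ^ m := by
    rw [spiralPotential, spiralPotential, sign_eq]
    rcases hlevel with rfl | rfl | ⟨rfl, rfl⟩ <;> [use l + 1; use k + 1; use 0] <;>
      push_cast <;> ring
  rw [diff, abs_mul, abs_neg_one_pow, abs_sign, one_mul]

lemma abs_spiralPotential_sub_of_same_level (k : ℕ) :
    |spiralPotential (k, 0) - spiralPotential (k, 3)| = 2 * k + 1 := by
  have diff : spiralPotential (k, 0) - spiralPotential (k, 3) = (-1) ^ k * (2 * k + 1) := by
    simp only [spiralPotential, Fin.reduceEq, if_true, if_false]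
    ring
  rw [diff, abs_mul, abs_neg_one_pow, one_mul, abs_of_nonneg (by positivity)]

lemma mul_abs_spiralPotential_sub_le_dist {η : ℝ} (hη : 0 < η) (hη' : 7 * η < 1) {n : ℕ}
    {u v : ℕ × Fin 4} (hu : u ∈ spiralIndices n) (hv : v ∈ spiralIndices n)
    (huv : ThetaThetaEdge ((spiralIndices n).image (spiralPoint η)) (spiralPoint η u)
      (spiralPoint η v)) :
    (2 - 28 * η) * |spiralPotential u - spiralPotential v| ≤
      dist (spiralPoint η u) (spiralPoint η v) := by
  have not_blocked := (isHexRanking_spiral hη hη').not_blocked_of_thetaThetaEdge hu hv huv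
  rcases sameCluster_or_linked_of_not_blocked hu hv not_blocked with h | h
  · rw [h.spiralPotential_eq, sub_self, abs_zero, mul_zero]
    exact dist_nonneg
  · rw [h.abs_spiralPotential_sub, mul_one]
    linarith [(abs_le.mp (abs_dist_spiral_sub_two_le hη h.1 h.level_le.1 h.level_le.2)).1]

lemma mul_two_mul_add_one_le_pathLength {η : ℝ} (hη : 0 < η) (hη' : 14 * η < 1) {n k : ℕ}
    {p : List ℂ} (hp : IsPath (TTAdj ((spiralIndices n).image (spiralPoint η)))
      (spiralPoint η (k, 0)) (spiralPoint η (k, 3)) p) :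
    (2 - 28 * η) * (2 * k + 1) ≤ pathLength p := by
  have potential_eq (i : ℕ × Fin 4) :
      Function.extend (spiralPoint η) spiralPotential 0 (spiralPoint η i) = spiralPotential i :=
    (isHexRanking_spiral hη (by linarith)).hexMap_injective.extend_apply _ _ i
  rw [← abs_spiralPotential_sub_of_same_level, ← potential_eq, ← potential_eq]
  refine mul_abs_sub_le_pathLength (by linarith) (fun a b hab => ?_) hp
  wlog h : ThetaThetaEdge ((spiralIndices n).image (spiralPoint η)) a b generalizing a b
  · rw [abs_sub_comm, dist_comm]
    exact this b a hab.symm (hab.resolve_left h)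
  obtain ⟨u, hu, rfl⟩ := Finset.mem_image.mp h.1.1
  obtain ⟨v, hv, rfl⟩ := Finset.mem_image.mp h.1.2.1
  rw [potential_eq, potential_eq]
  exact mul_abs_spiralPotential_sub_le_dist hη (by linarith) hu hv h

lemma one_sub_mul_dist_le {η ε : ℝ} (hη : 0 < η) (hη' : 28 * η ≤ 1) (hηε : 56 * η ≤ ε) (k : ℕ) :
    (1 - ε) * dist (spiralPoint η (k, 0)) (spiralPoint η (k, 3)) ≤ 2 - 28 * η := by
  have dist_close := abs_dist_spiral_sub_two_le hη (u := (k, 0)) (v := (k, 3)) (by simp)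
    (by simp) (by simp)
  rw [abs_le] at dist_close
  have : 56 * η * 1 ≤ ε * dist (spiralPoint η (k, 0)) (spiralPoint η (k, 3)) :=
    mul_le_mul hηε (by linarith) zero_le_one (by linarith)
  linarith

/-- For every `n ≥ 2` and `ε > 0` there is a set `S` of `4n` points in
general position and `u, v ∈ S` such that every path between `u` and `v` in `ΘΘ₆(S)` has
length at least `(1 - ε)·(2n - 1)·|uv|`. -/
theorem thetaTheta6_linear_spanning_ratio (n : ℕ) (hn : 2 ≤ n) (ε : ℝ) (hε : 0 < ε) :
    ∃ S : Finset ℂ, S.card = 4 * n ∧ GenPos S ∧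
      ∃ u ∈ S, ∃ v ∈ S, u ≠ v ∧
        ∀ p : List ℂ, IsPath (TTAdj S) u v p →
          (1 - ε) * (2 * (n : ℝ) - 1) * dist u v ≤ pathLength p := by
  obtain ⟨k, rfl⟩ : ∃ k, n = k + 1 := ⟨n - 1, by omega⟩
  obtain ⟨η, hη, hη_small, hηε⟩ : ∃ η : ℝ, 0 < η ∧ 28 * η ≤ 1 ∧ 56 * η ≤ ε :=
    ⟨min 1 ε / 56, by positivity, by linarith [min_le_left 1 ε], by linarith [min_le_right 1 ε]⟩
  have ranking := isHexRanking_spiral hη (by linarith)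
  have mem_image (c : Fin 4) : spiralPoint η (k, c) ∈ (spiralIndices (k + 1)).image _ :=
    Finset.mem_image_of_mem _ (mem_spiralIndices.mpr k.lt_succ_self)
  refine ⟨(spiralIndices (k + 1)).image (spiralPoint η), ?_, ranking.genPos _,
    _, mem_image 0, _, mem_image 3, ranking.hexMap_injective.ne (by simp), fun p hp => ?_⟩
  · rw [Finset.card_image_of_injective _ ranking.hexMap_injective]
    simp [spiralIndices, mul_comm]
  · calc (1 - ε) * (2 * (k + 1 : ℕ) - 1) * dist (spiralPoint η (k, 0)) (spiralPoint η (k, 3))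
        = (1 - ε) * dist (spiralPoint η (k, 0)) (spiralPoint η (k, 3)) * (2 * k + 1) := by
          push_cast
          ring
      _ ≤ (2 - 28 * η) * (2 * k + 1) := by
          gcongr
          exact one_sub_mul_dist_le hη hη_small hηε k
      _ ≤ pathLength p := mul_two_mul_add_one_le_pathLength hη (by linarith) hp

end
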